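/- arXiv:1604.05173 — 5 statements merged into one kernel-verified Lean document; each statement's English description precedes it below -/
import Mathlib

section
/- Let S : O(X) → [0,∞] be an increasing set function (i.e., S(A) ≤ S(B) for all A,B ∈ O(X) with A ⊆ B) satisfying: (i) S(∅) = 0; (ii) S is superadditive, i.e., S(A ∪ B) ≥ S(A) + S(B) for all A,B ∈ O(X) with A ∩ B = ∅; (iii) S is subadditive, i.e., S(A ∪ B) ≤ S(A) + S(B) for all A,B ∈ O(X); (iv) S(A) ≤ ν(A) for all A ∈ O(X). Then there exists a unique finite Borel measure m on X such that m(A) = S(A) for every A ∈ O(X), and this measure m is absolutely continuous with respect to ν. -/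
open MeasureTheory Set
open scoped ENNReal

theorem dgl_countable {X : Type*} [MetricSpace X] [MeasurableSpace X] [BorelSpace X]
    (ν : Measure X) [IsFiniteMeasure ν] (S : Set X → ℝ≥0∞)
    (hmono : ∀ A B : Set X, IsOpen A → IsOpen B → A ⊆ B → S A ≤ S B)
    (hempty : S ∅ = 0)
    (hsub : ∀ A B : Set X, IsOpen A → IsOpen B → S (A ∪ B) ≤ S A + S B)
    (hbound : ∀ A : Set X, IsOpen A → S A ≤ ν A)
    (f : ℕ → Set X) (hf : ∀ i, IsOpen (f i)) : S (⋃ i, f i) ≤ ∑' i, S (f i) := by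
  have hfin : ∀ n, S (accumulate f n) ≤ ∑' i, S (f i) := by
    intro n
    have h1 : S (accumulate f n) ≤ ∑ i ∈ Finset.range (n + 1), S (f i) := by
      induction n with
      | zero => simp [accumulate_zero_nat]
      | succ n ih =>
        rw [accumulate_succ, Finset.sum_range_succ]
        refine (hsub _ _ ?_ (hf _)).trans (by gcongr)
        exact isOpen_biUnion fun i _ => hf i
    exact h1.trans (ENNReal.sum_le_tsum _)
  have hacc : ∀ n, IsOpen (accumulate f n) := fun n => isOpen_biUnion fun i _ => hf i
  have hA : IsOpen (⋃ i, f i) := isOpen_iUnion hf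
  refine ENNReal.le_of_forall_pos_le_add fun ε hε _ => ?_
  have hε2 : (ε / 2 : ℝ≥0∞) ≠ 0 := by simp [hε.ne']
  obtain ⟨n, hn⟩ : ∃ n, ν (⋃ i, f i) ≤ ν (accumulate f n) + ε / 2 := by
    have := tendsto_measure_iUnion_accumulate (μ := ν) (f := f)
    have h2 := this.add_const (ε / 2 : ℝ≥0∞)
    have h3 := h2.eventually_const_le (ENNReal.lt_add_right (measure_ne_top ν _) hε2)
    exact h3.exists
  obtain ⟨K, hKs, hK, hKν⟩ :=
    (hacc n).measurableSet.exists_isClosed_lt_add (measure_ne_top ν _) hε2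
  have hKA : K ⊆ ⋃ i, f i := hKs.trans (accumulate_subset_iUnion n)
  have hdiff : ν ((⋃ i, f i) \ K) ≤ ε := by
    rw [measure_sdiff hKA hK.measurableSet.nullMeasurableSet (measure_ne_top ν _)]
    refine tsub_le_iff_left.2 (hn.trans ?_)
    calc ν (accumulate f n) + ε / 2 ≤ (ν K + ε / 2) + ε / 2 := by gcongr
      _ = ν K + ε := by rw [add_assoc, ENNReal.add_halves]
  have hopen : IsOpen ((⋃ i, f i) \ K) := hA.sdiff hK
  calc S (⋃ i, f i) ≤ S (accumulate f n ∪ ((⋃ i, f i) \ K)) := by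
        refine hmono _ _ hA ((hacc n).union hopen) fun x hx => ?_
        by_cases hxK : x ∈ K
        · exact Or.inl (hKs hxK)
        · exact Or.inr ⟨hx, hxK⟩
    _ ≤ S (accumulate f n) + S ((⋃ i, f i) \ K) := hsub _ _ (hacc n) hopen
    _ ≤ ∑' i, S (f i) + ε := add_le_add (hfin n) ((hbound _ hopen).trans hdiff)

/-- **De Giorgi–Letta.** An increasing set function on the open sets of a
metric space which vanishes on `∅`, is superadditive on disjoint open sets, subadditive
on open sets, and dominated by a finite Borel measure `ν`, extends uniquely to a finite
Borel measure on `X`, and this measure is absolutely continuous with respect to `ν`. -/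
theorem deGiorgi_letta
    {X : Type*} [MetricSpace X] [MeasurableSpace X] [BorelSpace X]
    (ν : Measure X) [IsFiniteMeasure ν]
    (S : Set X → ℝ≥0∞)
    (hmono : ∀ A B : Set X, IsOpen A → IsOpen B → A ⊆ B → S A ≤ S B)
    (hempty : S ∅ = 0)
    (hsuper : ∀ A B : Set X, IsOpen A → IsOpen B → A ∩ B = ∅ → S A + S B ≤ S (A ∪ B))
    (hsub : ∀ A B : Set X, IsOpen A → IsOpen B → S (A ∪ B) ≤ S A + S B)
    (hbound : ∀ A : Set X, IsOpen A → S A ≤ ν A) :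
    ∃ m : Measure X, IsFiniteMeasure m ∧ (∀ A : Set X, IsOpen A → m A = S A) ∧
      m ≪ ν ∧
      ∀ m' : Measure X, IsFiniteMeasure m' → (∀ A : Set X, IsOpen A → m' A = S A) →
        m' = m := by
  have hcount := dgl_countable ν S hmono hempty hsub hbound
  let μ : OuterMeasure X := inducedOuterMeasure (fun s (_ : IsOpen s) => S s) isOpen_empty hempty
  have hμ : ∀ A, IsOpen A → μ A = S A := fun A hA =>
    inducedOuterMeasure_eq' (m0 := hempty) (fun f hf => isOpen_iUnion hf) hcount
      (fun s t hs ht h => hmono s t hs ht h) hA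
  have hinf : ∀ s, μ s = ⨅ (t : Set X) (_ : IsOpen t) (_ : s ⊆ t), S t := fun s =>
    inducedOuterMeasure_eq_iInf (m0 := hempty) (fun f hf => isOpen_iUnion hf) hcount
      (fun s t hs ht h => hmono s t hs ht h) s
  have hmetric : μ.IsMetric := by
    rintro s t ⟨r, hr, hst⟩
    refine le_antisymm (measure_union_le s t) ?_
    rw [hinf (s ∪ t)]
    refine le_iInf fun W => le_iInf fun hW => le_iInf fun hsub' => ?_
    let U : Set X := {x | Metric.infEDist x s < Metric.infEDist x t}
    let V : Set X := {x | Metric.infEDist x t < Metric.infEDist x s}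
    have hU : IsOpen U := isOpen_lt Metric.continuous_infEDist Metric.continuous_infEDist
    have hV : IsOpen V := isOpen_lt Metric.continuous_infEDist Metric.continuous_infEDist
    have hr' : 0 < r := pos_iff_ne_zero.2 hr
    have hsU : s ⊆ W ∩ U := fun x hx => by
      refine ⟨hsub' (Or.inl hx), ?_⟩
      change Metric.infEDist x s < Metric.infEDist x t
      rw [Metric.infEDist_zero_of_mem hx]
      exact hr'.trans_le (Metric.le_infEDist.2 fun y hy => hst x hx y hy)
    have htV : t ⊆ W ∩ V := fun x hx => by
      refine ⟨hsub' (Or.inr hx), ?_⟩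
      change Metric.infEDist x t < Metric.infEDist x s
      rw [Metric.infEDist_zero_of_mem hx]
      exact hr'.trans_le (Metric.le_infEDist.2 fun y hy => edist_comm y x ▸ hst y hy x hx)
    calc μ s + μ t ≤ μ (W ∩ U) + μ (W ∩ V) := add_le_add (μ.mono hsU) (μ.mono htV)
      _ = S (W ∩ U) + S (W ∩ V) := by rw [hμ _ (hW.inter hU), hμ _ (hW.inter hV)]
      _ ≤ S ((W ∩ U) ∪ (W ∩ V)) := hsuper _ _ (hW.inter hU) (hW.inter hV) (by
          ext x
          simp only [mem_inter_iff, mem_empty_iff_false, iff_false]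
          rintro ⟨⟨_, h1⟩, _, h2⟩
          exact lt_asymm (show Metric.infEDist x s < Metric.infEDist x t from h1) h2)
      _ ≤ S W := hmono _ _ ((hW.inter hU).union (hW.inter hV)) hW
          (union_subset inter_subset_left inter_subset_left)
  have hle : ‹MeasurableSpace X› ≤ μ.caratheodory := by
    rw [BorelSpace.measurable_eq (α := X)]
    exact hmetric.borel_le_caratheodory
  have hm : ∀ A, IsOpen A → μ.toMeasure hle A = S A := fun A hA => by
    rw [toMeasure_apply _ _ hA.measurableSet, hμ A hA]
  have hmfin : IsFiniteMeasure (μ.toMeasure hle) :=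
    ⟨by rw [hm _ isOpen_univ]; exact (hbound _ isOpen_univ).trans_lt (measure_lt_top ν _)⟩
  refine ⟨μ.toMeasure hle, hmfin, hm, ?_, ?_⟩
  · apply Measure.absolutelyContinuous_of_le
    refine Measure.le_iff'.2 fun s => ?_
    rw [s.measure_eq_iInf_isOpen ν]
    refine le_iInf fun W => le_iInf fun hsW => le_iInf fun hW => ?_
    exact (measure_mono hsW).trans ((hm W hW).le.trans (hbound W hW))
  · intro m' hm'fin hm'
    refine ext_of_generate_finite {s | IsOpen s} (BorelSpace.measurable_eq (α := X))
      isPiSystem_isOpen (fun s hs => ?_) ?_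
    · rw [hm' s hs, hm s hs]
    · rw [hm' _ isOpen_univ, hm _ isOpen_univ]
end

section
/- Assume: L is ru-usc; for every x ∈ X and every t ∈ (0,1), t·cl(𝕃_x) ⊆ int(𝕃_x); and for every x ∈ X, L(x,·) is lower semicontinuous at every point of int(𝕃_x). Then L̂ is ru-usc, i.e., there exists a μ-locally integrable function a' : X → (0,∞] such that limsup_{t→1⁻} Δ^{a'}_{L̂}(t) ≤ 0. -/
open MeasureTheory Filter Topology Set
open scoped ENNReal Pointwise

/-- The Borel measurable structure on matrices, induced by the product structure. -/
instance matrixMeasurableSpace {m N : ℕ} : MeasurableSpace (Matrix (Fin m) (Fin N) ℝ) :=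
  inferInstanceAs (MeasurableSpace (Fin m → Fin N → ℝ))

noncomputable section

variable {X : Type*} {m N : ℕ}

/-- The effective domain `𝕃_x` of `L(x,·)`. -/
def effDom (L : X → Matrix (Fin m) (Fin N) ℝ → ℝ≥0∞) (x : X) :
    Set (Matrix (Fin m) (Fin N) ℝ) :=
  {ξ | L x ξ ≠ ⊤}

/-- The quotient `(L(x,tξ) − L(x,ξ)) / (a(x) + L(x,ξ))` (meaningful for `ξ ∈ 𝕃_x`),
with the convention that a quotient with denominator `∞` equals `0`. -/
def ruQuot (L : X → Matrix (Fin m) (Fin N) ℝ → ℝ≥0∞) (a : X → ℝ≥0∞) (t : ℝ) (x : X)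
    (ξ : Matrix (Fin m) (Fin N) ℝ) : EReal :=
  if a x + L x ξ = ⊤ then 0
  else if L x (t • ξ) = ⊤ then ⊤
  else ((((L x (t • ξ)).toReal - (L x ξ).toReal) / (a x + L x ξ).toReal : ℝ) : EReal)

/-- `Δ^a_L(t) = sup_{x ∈ X} sup_{ξ ∈ 𝕃_x} (L(x,tξ) − L(x,ξ)) / (a(x) + L(x,ξ))`. -/
def ruDelta (L : X → Matrix (Fin m) (Fin N) ℝ → ℝ≥0∞) (a : X → ℝ≥0∞) (t : ℝ) : EReal :=
  ⨆ (x : X) (ξ : Matrix (Fin m) (Fin N) ℝ) (_ : ξ ∈ effDom L x), ruQuot L a t x ξ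

/-- `a : X → (0,∞]` is `μ`-locally integrable. -/
def MuLocallyIntegrable [TopologicalSpace X] [MeasurableSpace X] (μ : Measure X)
    (a : X → ℝ≥0∞) : Prop :=
  ∀ x : X, ∃ U ∈ 𝓝 x, ∫⁻ y in U, a y ∂μ < ⊤

/-- `L` is radially uniformly upper semicontinuous (ru-usc): there is a `μ`-locally
integrable `a : X → (0,∞]` with `limsup_{t→1⁻} Δ^a_L(t) ≤ 0`. -/
def IsRuUsc [TopologicalSpace X] [MeasurableSpace X] (μ : Measure X)
    (L : X → Matrix (Fin m) (Fin N) ℝ → ℝ≥0∞) : Prop :=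
  ∃ a : X → ℝ≥0∞, (∀ x, 0 < a x) ∧ MuLocallyIntegrable μ a ∧
    limsup (fun t => ruDelta L a t) (𝓝[<] (1:ℝ)) ≤ (0 : EReal)

/-- `L̂(x,ξ) = liminf_{t→1⁻} L(x,tξ)`. -/
def hatL (L : X → Matrix (Fin m) (Fin N) ℝ → ℝ≥0∞) (x : X)
    (ξ : Matrix (Fin m) (Fin N) ℝ) : ℝ≥0∞ :=
  liminf (fun t : ℝ => L x (t • ξ)) (𝓝[<] (1:ℝ))

end

theorem ruQuot_le_imp {X : Type*} {m N : ℕ} (L : X → Matrix (Fin m) (Fin N) ℝ → ℝ≥0∞)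
    (a : X → ℝ≥0∞) (t ε : ℝ) (hε : 0 < ε) (x : X) (ξ : Matrix (Fin m) (Fin N) ℝ)
    (ha : 0 < a x) (hat : a x ≠ ⊤) (hL : L x ξ ≠ ⊤) :
    ruQuot L a t x ξ ≤ (ε : EReal) ↔
      L x (t • ξ) ≤ ENNReal.ofReal (1 + ε) * L x ξ + ENNReal.ofReal ε * a x := by
  have h1 : a x + L x ξ ≠ ⊤ := ENNReal.add_ne_top.2 ⟨hat, hL⟩
  have hr : ENNReal.ofReal (1 + ε) * L x ξ + ENNReal.ofReal ε * a x ≠ ⊤ :=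
    ENNReal.add_ne_top.2 ⟨ENNReal.mul_ne_top ENNReal.ofReal_ne_top hL,
      ENNReal.mul_ne_top ENNReal.ofReal_ne_top hat⟩
  unfold ruQuot
  rw [if_neg h1]
  by_cases h2 : L x (t • ξ) = ⊤
  · rw [if_pos h2, h2]
    constructor
    · intro h
      exact absurd (top_le_iff.1 h) (EReal.coe_ne_top ε)
    · intro h
      exact absurd (top_le_iff.1 h) hr
  · rw [if_neg h2, EReal.coe_le_coe_iff, ← ENNReal.toReal_le_toReal h2 hr,
      ENNReal.toReal_add (ENNReal.mul_ne_top ENNReal.ofReal_ne_top hL)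
        (ENNReal.mul_ne_top ENNReal.ofReal_ne_top hat), ENNReal.toReal_mul, ENNReal.toReal_mul,
      ENNReal.toReal_ofReal hε.le, ENNReal.toReal_ofReal (by linarith),
      ENNReal.toReal_add hat hL]
    have hp : 0 < (a x).toReal := ENNReal.toReal_pos ha.ne' hat
    have hq : 0 ≤ (L x ξ).toReal := ENNReal.toReal_nonneg
    rw [div_le_iff₀ (by linarith)]
    constructor <;> intro h <;> nlinarith

/-- If `L` is ru-usc, `t·cl(𝕃_x) ⊆ int(𝕃_x)` for every `x` and
`t ∈ (0,1)`, and `L(x,·)` is lsc at every point of `int(𝕃_x)`, then `L̂` is ru-usc. -/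
theorem ruUsc_hat
    {X : Type*} {m N : ℕ} [MetricSpace X] [MeasurableSpace X] [BorelSpace X]
    (μ : Measure X) [IsLocallyFiniteMeasure μ]
    (hm : 1 ≤ m) (hN : 1 ≤ N)
    (L : X → Matrix (Fin m) (Fin N) ℝ → ℝ≥0∞)
    (hmeas : Measurable fun p : X × Matrix (Fin m) (Fin N) ℝ => L p.1 p.2)
    (hru : IsRuUsc μ L)
    (hdom : ∀ x : X, ∀ t ∈ Set.Ioo (0:ℝ) 1,
        t • closure (effDom L x) ⊆ interior (effDom L x))
    (hlsc : ∀ x : X, ∀ ξ ∈ interior (effDom L x), LowerSemicontinuousAt (L x) ξ) :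
    ∃ a' : X → ℝ≥0∞, (∀ x, 0 < a' x) ∧ MuLocallyIntegrable μ a' ∧
      limsup (fun t => ruDelta (hatL L) a' t) (𝓝[<] (1:ℝ)) ≤ (0 : EReal) := by
  obtain ⟨a, ha, hai, hlim⟩ := hru
  refine ⟨a, ha, hai, ?_⟩
  refine EReal.le_of_forall_lt_iff_le.1 ?_
  intro ε hε
  have hε' : 0 < ε := by exact_mod_cast hε
  have hev : ∀ᶠ t in 𝓝[<] (1:ℝ), ruDelta L a t < (ε : EReal) :=
    eventually_lt_of_limsup_lt (lt_of_le_of_lt hlim hε)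
  refine limsup_le_of_le (by isBoundedDefault) ?_
  filter_upwards [hev] with t ht
  refine iSup_le fun x => iSup_le fun ξ => iSup_le fun hξ => ?_
  by_cases hat : a x = ⊤
  · simp only [ruQuot, hat, top_add, if_true]
    exact hε.le
  rw [ruQuot_le_imp (hatL L) a t ε hε' x ξ (ha x) hat hξ]
  have key : ∀ ζ, L x (t • ζ) ≤ ENNReal.ofReal (1 + ε) * L x ζ + ENNReal.ofReal ε * a x := by
    intro ζ
    by_cases hζ : L x ζ = ⊤
    · rw [hζ, ENNReal.mul_top (by simp; linarith)]
      simp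
    · rw [← ruQuot_le_imp L a t ε hε' x ζ (ha x) hat hζ]
      refine le_trans ?_ ht.le
      exact le_iSup_of_le x (le_iSup_of_le ζ (le_iSup_of_le (show ζ ∈ effDom L x from hζ) le_rfl))
  have hmono : Monotone fun y : ℝ≥0∞ => ENNReal.ofReal (1 + ε) * y + ENNReal.ofReal ε * a x := by
    intro y z hyz
    dsimp only
    gcongr
  have hcont : Continuous fun y : ℝ≥0∞ => ENNReal.ofReal (1 + ε) * y + ENNReal.ofReal ε * a x :=
    (ENNReal.continuous_const_mul ENNReal.ofReal_ne_top).add continuous_const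
  have hmap := hmono.map_liminf_of_continuousAt (F := 𝓝[<] (1:ℝ))
    (fun s : ℝ => L x (s • ξ)) hcont.continuousAt
  unfold hatL
  refine le_trans ?_ hmap.ge
  refine liminf_le_liminf (Eventually.of_forall fun s => ?_)
  have := key (s • ξ)
  rw [smul_comm] at this
  exact this
end

section
/- Let θ : O(X) → ℝ be a set function such that there exists a finite Borel measure ν̂ on X, absolutely continuous with respect to μ, with |θ(A)| ≤ ν̂(A) for all A ∈ O(X). If d⁻_μθ(x) ≥ 0 for every x ∈ X, then the lower Vitali envelope satisfies θ*(A) ≥ 0 for every A ∈ O(X). -/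
open MeasureTheory Filter Topology Set
open scoped ENNReal

variable {X : Type*}

/-- The "sphere" `∂Q` of the ball of center `x` and radius `ρ`:
the closed ball minus the open ball. -/
def ballFrontier [MetricSpace X] (x : X) (ρ : ℝ) : Set X :=
  Metric.closedBall x ρ \ Metric.ball x ρ

/-- `X` satisfies the Vitali covering theorem with respect to `μ`: a family of
closed balls (encoded by center-radius pairs) which is fine at each point of `A`
admits a countable disjoint subfamily covering `μ`-almost all of `A`. -/
def VitaliCoveringProperty [MetricSpace X] [MeasurableSpace X] (μ : Measure X) : Prop :=
  ∀ (A : Set X) (F : Set (X × ℝ)), (∀ p ∈ F, 0 < p.2) →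
    (∀ x ∈ A, ∀ ε > 0, ∃ r : ℝ, 0 < r ∧ r < ε ∧ (x, r) ∈ F) →
    ∃ G ⊆ F, G.Countable ∧
      G.PairwiseDisjoint (fun p => Metric.closedBall p.1 p.2) ∧
      μ (A \ ⋃ p ∈ G, Metric.closedBall p.1 p.2) = 0

/-- Membership in the class `V_ε(A)`: a countable family (encoded by center-radius
pairs) of pairwise disjoint open balls of `A`, centered in `A`, with radii in `(0,ε)`,
`μ`-negligible spheres, covering `μ`-almost all of `A`. -/
def IsVitaliPack [MetricSpace X] [MeasurableSpace X] (μ : Measure X) (ε : ℝ) (A : Set X)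
    (P : Set (X × ℝ)) : Prop :=
  P.Countable ∧
  (∀ p ∈ P, p.1 ∈ A ∧ 0 < p.2 ∧ p.2 < ε ∧ Metric.ball p.1 p.2 ⊆ A ∧
      μ (ballFrontier p.1 p.2) = 0) ∧
  P.PairwiseDisjoint (fun p => Metric.ball p.1 p.2) ∧
  μ (A \ ⋃ p ∈ P, Metric.ball p.1 p.2) = 0

/-- The extended-real valued sum `Σ_{i∈I} Θ(Q_i)` over a countable family of balls,
defined as the difference of the sums of the positive and negative parts. -/
noncomputable def packSum [MetricSpace X] (Θ : Set X → ℝ) (P : Set (X × ℝ)) : EReal :=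
  ((∑' p : P, ENNReal.ofReal (Θ (Metric.ball (p : X × ℝ).1 (p : X × ℝ).2)) : ℝ≥0∞) : EReal)
    - ((∑' p : P, ENNReal.ofReal (-Θ (Metric.ball (p : X × ℝ).1 (p : X × ℝ).2)) : ℝ≥0∞) : EReal)

/-- The lower Vitali envelope `Θ*(A) = lim_{ε→0} inf { Σ_i Θ(Q_i) : {Q_i} ∈ V_ε(A) }`,
realized as the supremum over `ε > 0` of the infima (inf over the empty class is `+∞`). -/
noncomputable def lowerVitaliEnvelope [MetricSpace X] [MeasurableSpace X]
    (μ : Measure X) (Θ : Set X → ℝ) (A : Set X) : EReal :=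
  ⨆ (ε : ℝ) (_ : 0 < ε), sInf (packSum Θ '' {P | IsVitaliPack μ ε A P})

/-- The upper Vitali envelope `Θ̄*(A) = lim_{ε→0} sup { Σ_i Θ(Q_i) : {Q_i} ∈ V_ε(A) }`,
realized as the infimum over `ε > 0` of the suprema (sup over the empty class is `-∞`). -/
noncomputable def upperVitaliEnvelope [MetricSpace X] [MeasurableSpace X]
    (μ : Measure X) (Θ : Set X → ℝ) (A : Set X) : EReal :=
  ⨅ (ε : ℝ) (_ : 0 < ε), sSup (packSum Θ '' {P | IsVitaliPack μ ε A P})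

/-- The lower derivative `d⁻_μΘ(x) = lim_{ρ→0} inf { Θ(Q)/μ(Q) : Q ∈ Ba(X,x,ρ) }`,
realized as the supremum over `ρ > 0` of the infima over open balls containing `x`,
with radius in `(0,ρ)` and `μ`-negligible sphere. -/
noncomputable def lowerDeriv [MetricSpace X] [MeasurableSpace X]
    (μ : Measure X) (Θ : Set X → ℝ) (x : X) : EReal :=
  ⨆ (ρ : ℝ) (_ : 0 < ρ), sInf {v : EReal | ∃ (y : X) (r : ℝ), 0 < r ∧ r < ρ ∧
      x ∈ Metric.ball y r ∧ μ (ballFrontier y r) = 0 ∧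
      v = ((Θ (Metric.ball y r) / (μ (Metric.ball y r)).toReal : ℝ) : EReal)}

/-- The upper derivative `d⁺_μΘ(x) = lim_{ρ→0} sup { Θ(Q)/μ(Q) : Q ∈ Ba(X,x,ρ) }`. -/
noncomputable def upperDeriv [MetricSpace X] [MeasurableSpace X]
    (μ : Measure X) (Θ : Set X → ℝ) (x : X) : EReal :=
  ⨅ (ρ : ℝ) (_ : 0 < ρ), sSup {v : EReal | ∃ (y : X) (r : ℝ), 0 < r ∧ r < ρ ∧
      x ∈ Metric.ball y r ∧ μ (ballFrontier y r) = 0 ∧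
      v = ((Θ (Metric.ball y r) / (μ (Metric.ball y r)).toReal : ℝ) : EReal)}

/-- If `|θ| ≤ ν̂` on open sets for some finite measure `ν̂ ≪ μ` and
`θ` has nonnegative lower derivative everywhere, then its lower Vitali envelope is
nonnegative on every open set. -/
theorem lowerVitaliEnvelope_nonneg_of_lowerDeriv_nonneg
    [MetricSpace X] [MeasurableSpace X] [BorelSpace X]
    (μ : Measure X) [IsFiniteMeasure μ]
    (hpos : ∀ (x : X) (ρ : ℝ), 0 < ρ → 0 < μ (Metric.ball x ρ))
    (θ : Set X → ℝ)
    (ha : ∃ νh : Measure X, IsFiniteMeasure νh ∧ νh ≪ μ ∧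
        ∀ A : Set X, IsOpen A → |θ A| ≤ (νh A).toReal)
    (hd : ∀ x : X, 0 ≤ lowerDeriv μ θ x) :
    ∀ A : Set X, IsOpen A → 0 ≤ lowerVitaliEnvelope μ θ A := by
  intro A hA
  obtain ⟨ν, hνf, -, hν⟩ := ha
  by_contra hneg
  rw [not_le] at hneg
  obtain ⟨c, hc1, hc2⟩ := EReal.lt_iff_exists_real_btwn.1 hneg
  have hc0 : c < 0 := by exact_mod_cast hc2
  obtain ⟨δ, hδ⟩ : ∃ δ : ℝ, δ = -c := ⟨_, rfl⟩
  have hδ0 : 0 < δ := by linarith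
  obtain ⟨η, hη⟩ : ∃ η : ℝ, η = δ / 2 / ((μ univ).toReal + 1) := ⟨_, rfl⟩
  have hm : 0 ≤ (μ univ).toReal := ENNReal.toReal_nonneg
  have hη0 : 0 < η := by rw [hη]; positivity
  have hημ : ENNReal.ofReal η * μ univ ≤ ENNReal.ofReal (δ / 2) := by
    rw [← ENNReal.ofReal_toReal (measure_ne_top μ univ), ← ENNReal.ofReal_mul hη0.le]
    apply ENNReal.ofReal_le_ofReal
    rw [hη, div_mul_eq_mul_div, div_le_iff₀ (by positivity)]
    nlinarith
  let E : ℕ → Set X := fun n => {x | ∀ (y : X) (r : ℝ), 0 < r → r < 1 / ((n : ℝ) + 1) →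
    x ∈ Metric.ball y r → μ (ballFrontier y r) = 0 →
    -θ (Metric.ball y r) ≤ η * (μ (Metric.ball y r)).toReal}
  have hEmono : Monotone E := by
    intro m n hmn x hx y r hr hrn
    refine hx y r hr (hrn.trans_le ?_)
    exact one_div_le_one_div_of_le (by positivity) (by exact_mod_cast Nat.add_le_add_right hmn 1)
  have hEun : ⋃ n, E n = univ := by
    refine eq_univ_of_forall fun x => ?_
    have h1 : ((-η : ℝ) : EReal) < lowerDeriv μ θ x :=
      lt_of_lt_of_le (by exact_mod_cast (neg_lt_zero.2 hη0)) (hd x)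
    unfold lowerDeriv at h1
    simp only [lt_iSup_iff] at h1
    obtain ⟨ρ, hρ, h2⟩ := h1
    obtain ⟨n, hn⟩ := exists_nat_one_div_lt hρ
    refine mem_iUnion.2 ⟨n, fun y r hr hrn hx hf => ?_⟩
    have h3 := h2.le.trans (sInf_le ⟨y, r, hr, hrn.trans hn, hx, hf, rfl⟩)
    have h4 : -η ≤ θ (Metric.ball y r) / (μ (Metric.ball y r)).toReal := by exact_mod_cast h3
    have h5 : 0 < (μ (Metric.ball y r)).toReal :=
      ENNReal.toReal_pos (hpos y r hr).ne' (measure_ne_top _ _)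
    rw [le_div_iff₀ h5] at h4
    linarith
  have hlim : Tendsto (fun n => ν (E n)) atTop (𝓝 (ν univ)) := by
    rw [← hEun]; exact tendsto_measure_iUnion_atTop hEmono
  obtain ⟨n, hn⟩ : ∃ n, ν univ ≤ ν (E n) + ENNReal.ofReal (δ / 2) := by
    have h1 := hlim.add_const (ENNReal.ofReal (δ / 2))
    have h2 : ν univ < ν univ + ENNReal.ofReal (δ / 2) :=
      ENNReal.lt_add_right (measure_ne_top _ _) (by simpa using hδ0)
    exact ((h1.eventually_const_lt h2).exists).imp fun _ h => h.le
  refine absurd hc1 (not_lt.2 ?_)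
  unfold lowerVitaliEnvelope
  refine le_iSup₂_of_le (1 / ((n : ℝ) + 1)) (by positivity) (le_sInf ?_)
  rintro _ ⟨P, ⟨hPc, hP, hPd, -⟩, rfl⟩
  have := hPc.to_subtype
  let B : P → Set X := fun p => Metric.ball p.1.1 p.1.2
  have hBo : ∀ p, IsOpen (B p) := fun p => Metric.isOpen_ball
  have hBm : ∀ p, MeasurableSet (B p) := fun p => (hBo p).measurableSet
  have hBd : Pairwise (Function.onFun Disjoint B) := fun p q hpq =>
    hPd p.2 q.2 (fun h => hpq (Subtype.ext h))
  classical
  let C : P → Set X := fun p => if Disjoint (B p) (E n) then B p else ∅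
  have hCB : ∀ p, C p ⊆ B p := fun p => by
    by_cases h : Disjoint (B p) (E n) <;> simp [C, h]
  have hCm : ∀ p, MeasurableSet (C p) := fun p => by
    by_cases h : Disjoint (B p) (E n) <;> simp [C, h, hBm p]
  have hCE : ∀ p, Disjoint (C p) (E n) := fun p => by
    by_cases h : Disjoint (B p) (E n) <;> simp [C, h]
  have hCd : Pairwise (Function.onFun Disjoint C) := fun p q hpq =>
    (hBd hpq).mono (hCB p) (hCB q)
  have hpt : ∀ p, ENNReal.ofReal (-θ (B p)) ≤ ENNReal.ofReal η * μ (B p) + ν (C p) := by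
    intro p
    by_cases h : Disjoint (B p) (E n)
    · have h1 : ENNReal.ofReal (-θ (B p)) ≤ ν (B p) := by
        rw [← ENNReal.ofReal_toReal (measure_ne_top ν (B p))]
        exact ENNReal.ofReal_le_ofReal ((neg_le_abs _).trans (hν _ (hBo p)))
      simpa [C, h] using h1.trans le_add_self
    · obtain ⟨x, hx1, hx2⟩ := not_disjoint_iff.1 h
      obtain ⟨-, h2, h3, -, h4⟩ := hP p.1 p.2
      have h5 := hx2 p.1.1 p.1.2 h2 h3 hx1 h4
      refine le_add_right ?_
      rw [← ENNReal.ofReal_toReal (measure_ne_top μ (B p)), ← ENNReal.ofReal_mul hη0.le]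
      exact ENNReal.ofReal_le_ofReal h5
  have hU : ν (⋃ p, C p) ≤ ENNReal.ofReal (δ / 2) := by
    have hUm := MeasurableSet.iUnion hCm
    have h1 : E n ⊆ (⋃ p, C p)ᶜ := by
      intro x hx hx'
      obtain ⟨p, hp⟩ := mem_iUnion.1 hx'
      exact disjoint_left.1 (hCE p) hp hx
    have h2 := measure_add_measure_compl (μ := ν) hUm
    have h3 : ν (E n) + ν (⋃ p, C p) ≤ ν (E n) + ENNReal.ofReal (δ / 2) := by
      refine le_trans ?_ hn
      rw [← h2, add_comm]
      gcongr
    exact (ENNReal.add_le_add_iff_left (measure_ne_top _ _)).1 h3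
  have hsum : ∑' p : P, ENNReal.ofReal (-θ (B p)) ≤ ENNReal.ofReal δ := by
    calc _ ≤ ∑' p : P, (ENNReal.ofReal η * μ (B p) + ν (C p)) := ENNReal.tsum_le_tsum hpt
      _ = ENNReal.ofReal η * μ (⋃ p, B p) + ν (⋃ p, C p) := by
        rw [ENNReal.tsum_add, ENNReal.tsum_mul_left, measure_iUnion hBd hBm,
          measure_iUnion hCd hCm]
      _ ≤ ENNReal.ofReal η * μ univ + ENNReal.ofReal (δ / 2) := by
        gcongr
        exact subset_univ _
      _ ≤ ENNReal.ofReal (δ / 2) + ENNReal.ofReal (δ / 2) := by gcongr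
      _ = ENNReal.ofReal δ := by
        rw [← ENNReal.ofReal_add (by positivity) (by positivity), add_halves]
  have hfin : (c : EReal) = 0 - ((ENNReal.ofReal δ : ℝ≥0∞) : EReal) := by
    rw [EReal.coe_ennreal_ofReal, max_eq_left hδ0.le, zero_sub, hδ]
    simp
  rw [hfin]
  unfold packSum
  exact EReal.sub_le_sub (EReal.coe_ennreal_nonneg _) (EReal.coe_ennreal_le_coe_ennreal_iff.2 hsum)
end

section
/- Suppose the set function Θ : O(X) → ℝ satisfies hypotheses (a) and (b). Then for every open ball Q of X with μ(∂Q) = 0, Θ(Q) ≤ Θ*(Q). -/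
open MeasureTheory Filter Topology Set
open scoped ENNReal

variable {X : Type*}

/-- If `Θ` satisfies hypotheses (a) and (b), then for every open
ball `Q` with `μ(∂Q) = 0` one has `Θ(Q) ≤ Θ*(Q)`. -/
theorem Theta_le_lowerVitaliEnvelope_on_balls
    [MetricSpace X] [MeasurableSpace X] [BorelSpace X]
    (μ : Measure X) [IsFiniteMeasure μ]
    (hpos : ∀ (x : X) (ρ : ℝ), 0 < ρ → 0 < μ (Metric.ball x ρ))
    (Θ : Set X → ℝ)
    (ha : ∃ ν : Measure X, IsFiniteMeasure ν ∧ ν ≪ μ ∧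
        ∀ A : Set X, IsOpen A → |Θ A| ≤ (ν A).toReal)
    (hb : ∀ A B C : Set X, IsOpen A → IsOpen B → IsOpen C → B ⊆ A → C ⊆ A →
        B ∩ C = ∅ → μ (A \ (B ∪ C)) = 0 → Θ A ≤ Θ B + Θ C) :
    ∀ (x : X) (ρ : ℝ), 0 < ρ → μ (ballFrontier x ρ) = 0 →
      ((Θ (Metric.ball x ρ) : ℝ) : EReal) ≤ lowerVitaliEnvelope μ Θ (Metric.ball x ρ) := by
  obtain ⟨ν, hν, -, hΘ⟩ := ha
  intro x ρ hρ _
  refine le_iSup₂_of_le (1 : ℝ) one_pos (le_sInf ?_)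
  rintro _ ⟨P, ⟨hPc, hP, hdis, hcov⟩, rfl⟩
  have : Countable P := hPc.to_subtype
  set A := Metric.ball x ρ with hA
  let Q : P → Set X := fun p => Metric.ball (p : X × ℝ).1 (p : X × ℝ).2
  have hQo : ∀ p, IsOpen (Q p) := fun p => Metric.isOpen_ball
  have hQA : ∀ p, Q p ⊆ A := fun p => (hP p p.2).2.2.2.1
  have hQd : Pairwise (Function.onFun Disjoint Q) := by
    intro p q hpq
    exact hdis p.2 q.2 (fun h => hpq (Subtype.ext h))
  have hQcov : μ (A \ ⋃ p, Q p) = 0 := by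
    rw [Set.biUnion_eq_iUnion] at hcov
    exact hcov
  have h0 : Θ ∅ = 0 := by
    have := hΘ ∅ isOpen_empty
    simpa using this
  -- summability
  have hν1 : ∑' p, ν (Q p) ≠ ∞ := by
    rw [← measure_iUnion hQd (fun p => (hQo p).measurableSet)]
    exact measure_ne_top _ _
  have hνs : Summable fun p => (ν (Q p)).toReal := ENNReal.summable_toReal hν1
  have hs : Summable fun p => Θ (Q p) :=
    Summable.of_norm_bounded hνs (fun p => hΘ _ (hQo p))
  have hfin : ∀ F : Finset P, Θ (⋃ p ∈ F, Q p) ≤ ∑ p ∈ F, Θ (Q p) := by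
    classical
    intro F
    induction F using Finset.induction_on with
    | empty => simp [h0]
    | insert a F ha ih =>
      rw [Finset.sum_insert ha]
      have := hb (⋃ p ∈ insert a F, Q p) (Q a) (⋃ p ∈ F, Q p)
        (isOpen_biUnion fun p _ => hQo p) (hQo a) (isOpen_biUnion fun p _ => hQo p)
        (by rw [Finset.set_biUnion_insert]; exact subset_union_left)
        (by rw [Finset.set_biUnion_insert]; exact subset_union_right)
        (by
          rw [← Set.disjoint_iff_inter_eq_empty, Set.disjoint_iUnion₂_right]
          intro p hp
          exact hQd (fun h => ha (h ▸ hp)))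
        (by rw [Finset.set_biUnion_insert]; simp)
      linarith
  have key : ∀ F : Finset P, Θ A ≤ ∑ p ∈ F, Θ (Q p) +
      (∑' p, (ν (Q p)).toReal - ∑ p ∈ F, (ν (Q p)).toReal) := by
    intro F
    have h1 := hb A (⋃ p ∈ F, Q p) (⋃ p : {p // p ∉ F}, Q p) Metric.isOpen_ball
        (isOpen_biUnion fun p _ => hQo p) (isOpen_iUnion fun p => hQo p)
        (iUnion₂_subset fun p _ => hQA p) (iUnion_subset fun p => hQA p)
        (by
          rw [← Set.disjoint_iff_inter_eq_empty, Set.disjoint_iUnion_right]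
          intro q
          rw [Set.disjoint_iUnion₂_left]
          intro p hp
          exact hQd (fun h => q.2 (h ▸ hp)))
        (by
          refine measure_mono_null (sdiff_subset_sdiff_right ?_) hQcov
          refine iUnion_subset fun p => ?_
          by_cases hp : p ∈ F
          · exact (Set.subset_biUnion_of_mem (u := Q) (s := {p | p ∈ F}) hp).trans
              subset_union_left
          · exact (Set.subset_iUnion (fun p : {p // p ∉ F} => Q p) ⟨p, hp⟩).trans
              subset_union_right)
    have h2 := (abs_le.1 (hΘ (⋃ p : {p // p ∉ F}, Q p) (isOpen_iUnion fun p => hQo p))).2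
    rw [measure_iUnion (f := fun p : {p // p ∉ F} => Q p)
      (fun p q hpq => hQd (i := p.1) (j := q.1) (fun h => hpq (Subtype.ext h)))
      (fun p => (hQo p).measurableSet), ENNReal.tsum_toReal_eq (fun _ => measure_ne_top _ _)] at h2
    have h3 := hνs.sum_add_tsum_subtype_compl F
    have h4 := hfin F
    linarith
  have hle : Θ A ≤ ∑' p, Θ (Q p) := by
    have ht := Filter.Tendsto.add hs.hasSum
      ((tendsto_const_nhds (x := ∑' p, (ν (Q p)).toReal)).sub hνs.hasSum)
    have := ge_of_tendsto' ht key
    linarith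
  have e : ∀ g : P → ℝ, Summable g →
      ((∑' p, ENNReal.ofReal (g p) : ℝ≥0∞) : EReal) = ((∑' p, max (g p) 0 : ℝ) : EReal) := by
    intro g hg
    have hm : Summable fun p => max (g p) 0 :=
      Summable.of_norm_bounded hg.abs (fun p => by
        rw [Real.norm_eq_abs, abs_of_nonneg (le_max_right _ _)]
        exact max_le (le_abs_self _) (abs_nonneg _))
    have : ∑' p, ENNReal.ofReal (g p) = ENNReal.ofReal (∑' p, max (g p) 0) := by
      rw [ENNReal.ofReal_tsum_of_nonneg (fun p => le_max_right _ _) hm]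
      congr 1; ext p
      rcases le_total 0 (g p) with h | h
      · rw [max_eq_left h]
      · rw [max_eq_right h, ENNReal.ofReal_of_nonpos h, ENNReal.ofReal_zero]
    rw [this, EReal.coe_ennreal_ofReal, max_eq_left (tsum_nonneg fun p => le_max_right _ _)]
  have hm : ∀ g : P → ℝ, Summable g → Summable fun p => max (g p) 0 := fun g hg =>
    Summable.of_norm_bounded hg.abs (fun p => by
        rw [Real.norm_eq_abs, abs_of_nonneg (le_max_right _ _)]
        exact max_le (le_abs_self _) (abs_nonneg _))
  have hpk : packSum Θ P = ((∑' p, Θ (Q p) : ℝ) : EReal) := by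
    unfold packSum
    rw [e (fun p => Θ (Q p)) hs, e (fun p => -Θ (Q p)) hs.neg, ← EReal.coe_sub,
      ← (hm _ hs).tsum_sub (hm _ hs.neg)]
    congr 2; ext p
    rcases le_total 0 (Θ (Q p)) with h | h
    · rw [max_eq_left h, max_eq_right (by linarith)]; ring
    · rw [max_eq_right h, max_eq_left (by linarith)]; ring
  rw [hpk]
  exact_mod_cast hle
end

section
/- Suppose X satisfies the Vitali covering theorem with respect to μ and the set function Θ : O(X) → ℝ satisfies hypotheses (a) and (b). Then the lower and upper Vitali envelopes of Θ coincide: Θ*(A) = Θ̄*(A) for every A ∈ O(X). -/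
open MeasureTheory Filter Topology Set
open scoped ENNReal

variable {X : Type*}

open Metric in
lemma vit_sub [MetricSpace X] [MeasurableSpace X] [BorelSpace X]
    (μ ν : Measure X) [IsFiniteMeasure ν] (Θ : Set X → ℝ)
    (ha : ∀ A : Set X, IsOpen A → |Θ A| ≤ (ν A).toReal)
    (hb : ∀ A B C : Set X, IsOpen A → IsOpen B → IsOpen C → B ⊆ A → C ⊆ A →
        B ∩ C = ∅ → μ (A \ (B ∪ C)) = 0 → Θ A ≤ Θ B + Θ C)
    (T : Finset (X × ℝ)) : ∀ U : Set X, IsOpen U →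
    (∀ q ∈ T, ball q.1 q.2 ⊆ U ∧ μ (ballFrontier q.1 q.2) = 0) →
    (T : Set (X × ℝ)).PairwiseDisjoint (fun p => ball p.1 p.2) →
    Θ U ≤ ∑ q ∈ T, Θ (ball q.1 q.2) + (ν.real U - ∑ q ∈ T, ν.real (ball q.1 q.2)) := by
  classical
  induction T using Finset.induction_on with
  | empty =>
    intro U hU _ _
    rw [Finset.sum_empty, Finset.sum_empty, sub_zero, zero_add]
    exact (le_abs_self _).trans (ha U hU)
  | insert q T hq ih =>
    intro U hU hT hd
    have hqU := hT q (Finset.mem_insert_self _ _)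
    have hU' : IsOpen (U \ closure (ball q.1 q.2)) := hU.sdiff isClosed_closure
    have h1 : Θ U ≤ Θ (ball q.1 q.2) + Θ (U \ closure (ball q.1 q.2)) := by
      refine hb _ _ _ hU isOpen_ball hU' hqU.1 diff_subset ?_ ?_
      · ext z
        simp only [mem_inter_iff, mem_diff, mem_empty_iff_false, iff_false, not_and, not_not]
        intro hz _
        exact subset_closure hz
      · refine measure_mono_null ?_ hqU.2
        rintro z ⟨hz, hz2⟩
        simp only [mem_union, mem_diff, not_or, not_and, not_not] at hz2
        exact ⟨closure_ball_subset_closedBall (hz2.2 hz), hz2.1⟩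
    have h2 := ih _ hU' (fun p hp => ⟨?_, (hT p (Finset.mem_insert_of_mem hp)).2⟩)
      (hd.subset (by simp))
    · have h3 : ν.real (U \ closure (ball q.1 q.2)) ≤ ν.real U - ν.real (ball q.1 q.2) := by
        rw [← measureReal_diff hqU.1 isOpen_ball.measurableSet]
        exact measureReal_mono (diff_subset_diff_right subset_closure)
      rw [Finset.sum_insert hq, Finset.sum_insert hq]
      linarith
    · have hne : p ≠ q := fun h => hq (h ▸ hp)
      have hdis : Disjoint (ball p.1 p.2) (ball q.1 q.2) :=
        hd (by simp [hp]) (by simp) hne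
      intro z hz
      exact ⟨(hT p (Finset.mem_insert_of_mem hp)).1 hz,
        fun hz2 => (hdis.closure_right isOpen_ball).le_bot ⟨hz, hz2⟩⟩

open Metric in
lemma vit_hasSum [MetricSpace X] [MeasurableSpace X] [BorelSpace X]
    (μ ν : Measure X) [IsFiniteMeasure ν] (hν : ν ≪ μ) {ε : ℝ} {A : Set X}
    {P : Set (X × ℝ)} (hP : IsVitaliPack μ ε A P) :
    HasSum (fun p : P => ν.real (ball p.1.1 p.1.2)) (ν.real A) := by
  obtain ⟨hc, h1, hd, h0⟩ := hP
  have : Countable P := hc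
  have hm := measure_biUnion (μ := ν) hc hd (fun p _ => isOpen_ball.measurableSet)
  have hA : ν (⋃ p ∈ P, ball p.1 p.2) = ν A := by
    refine measure_congr (HasSubset.Subset.eventuallyLE ?_ |>.antisymm ?_)
    · exact iUnion₂_subset fun p hp => (h1 p hp).2.2.2.1
    · exact ae_le_set.2 (hν h0)
  rw [hA] at hm
  have hne : ∑' p : P, ν (ball p.1.1 p.1.2) ≠ ∞ := by
    rw [← hm]; exact measure_ne_top _ _
  have := ENNReal.hasSum_toReal hne
  rw [← ENNReal.tsum_toReal_eq (fun _ => measure_ne_top _ _), ← hm] at this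
  exact this

open Metric in
lemma vit_packSum [MetricSpace X] (Θ : Set X → ℝ) (P : Set (X × ℝ))
    (hs : Summable (fun p : P => Θ (ball p.1.1 p.1.2))) :
    packSum Θ P = ((∑' p : P, Θ (ball p.1.1 p.1.2) : ℝ) : EReal) := by
  have key : ∀ f : P → ℝ, Summable f →
      ((∑' p, ENNReal.ofReal (f p) : ℝ≥0∞) : EReal) = ((∑' p, max (f p) 0 : ℝ) : EReal) := by
    intro f hf
    have h1 : Summable (fun p => max (f p) 0) :=
      Summable.of_norm_bounded hf.abs (fun p => by
        rw [Real.norm_eq_abs, abs_of_nonneg (le_max_right _ _)]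
        exact max_le (le_abs_self _) (abs_nonneg _))
    have h2 : ∑' p, ENNReal.ofReal (f p) = ENNReal.ofReal (∑' p, max (f p) 0) := by
      rw [ENNReal.ofReal_tsum_of_nonneg (fun _ => le_max_right _ _) h1]
      congr 1; ext p
      rcases le_total (f p) 0 with h | h <;> simp [h, ENNReal.ofReal_of_nonpos]
    rw [h2, EReal.coe_ennreal_ofReal, max_eq_left (tsum_nonneg fun _ => le_max_right _ _)]
  have hmax : ∀ f : P → ℝ, Summable f → Summable (fun p => max (f p) 0) := fun f hf =>
      Summable.of_norm_bounded hf.abs (fun p => by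
        rw [Real.norm_eq_abs, abs_of_nonneg (le_max_right _ _)]
        exact max_le (le_abs_self _) (abs_nonneg _))
  unfold packSum
  rw [key _ hs, key _ hs.neg, ← EReal.coe_sub, ← (hmax _ hs).tsum_sub (hmax _ hs.neg)]
  congr 2; ext p
  rcases le_total (Θ (ball p.1.1 p.1.2)) 0 with h | h <;> simp [h]

open Metric in
lemma vit_summable [MetricSpace X] [MeasurableSpace X] [BorelSpace X]
    (μ ν : Measure X) [IsFiniteMeasure ν] (hν : ν ≪ μ) (Θ : Set X → ℝ)
    (ha : ∀ A : Set X, IsOpen A → |Θ A| ≤ (ν A).toReal) {ε : ℝ} {A : Set X}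
    {P : Set (X × ℝ)} (hP : IsVitaliPack μ ε A P) :
    Summable (fun p : P => Θ (ball p.1.1 p.1.2)) :=
  Summable.of_norm_bounded (vit_hasSum μ ν hν hP).summable (fun p => ha _ isOpen_ball)

open Metric in
lemma vit_tail [MetricSpace X] [MeasurableSpace X] [BorelSpace X]
    (μ ν : Measure X) [IsFiniteMeasure ν] (hν : ν ≪ μ) (Θ : Set X → ℝ)
    (ha : ∀ A : Set X, IsOpen A → |Θ A| ≤ (ν A).toReal) {ε : ℝ} {A : Set X}
    {P : Set (X × ℝ)} (hP : IsVitaliPack μ ε A P) (s : Finset (X × ℝ)) (hs : (s : Set _) ⊆ P) :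
    |∑' p : P, Θ (ball p.1.1 p.1.2) - ∑ p ∈ s, Θ (ball p.1 p.2)|
      ≤ ν.real A - ∑ p ∈ s, ν.real (ball p.1 p.2) := by
  classical
  have hg := vit_hasSum μ ν hν hP
  have hf := vit_summable μ ν hν Θ ha hP
  have conv : ∀ F : X × ℝ → ℝ, ∑ p ∈ s, F p = ∑ p ∈ s.subtype (· ∈ P), F p := by
    intro F
    rw [Finset.sum_subtype_of_mem F (fun x hx => hs hx)]
  have hab : ∀ p : X × ℝ, |Θ (ball p.1 p.2)| ≤ ν.real (ball p.1 p.2) :=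
    fun p => ha _ isOpen_ball
  rw [conv (fun p => Θ (ball p.1 p.2)), conv (fun p => ν.real (ball p.1 p.2)), ← hg.tsum_eq]
  have a1 := (hg.summable.sub hf).sum_le_tsum (s.subtype (· ∈ P))
    (fun p _ => by have := (abs_le.1 (hab p)).2; simpa using this)
  have a2 := (hg.summable.add hf).sum_le_tsum (s.subtype (· ∈ P))
    (fun p _ => by have := (abs_le.1 (hab p)).1; linarith)
  rw [hg.summable.tsum_sub hf, Finset.sum_sub_distrib] at a1
  rw [hg.summable.tsum_add hf, Finset.sum_add_distrib] at a2
  rw [abs_le]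
  constructor <;> linarith

open Metric in
lemma vit_finset [MetricSpace X] [MeasurableSpace X] [BorelSpace X]
    (μ ν : Measure X) [IsFiniteMeasure ν] (hν : ν ≪ μ) {ε : ℝ} {A : Set X}
    {P : Set (X × ℝ)} (hP : IsVitaliPack μ ε A P) {η : ℝ} (hη : 0 < η) :
    ∃ s : Finset (X × ℝ), (s : Set _) ⊆ P ∧
      ν.real A - η < ∑ p ∈ s, ν.real (ball p.1 p.2) := by
  classical
  have hg := vit_hasSum μ ν hν hP
  obtain ⟨t, ht⟩ := (hg.eventually (lt_mem_nhds (sub_lt_self _ hη))).exists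
  refine ⟨t.map (Function.Embedding.subtype _), ?_, ?_⟩
  · intro x hx
    simp at hx
    exact hx.1
  · simpa using ht

open Metric in
lemma vit_shrink [MetricSpace X] [MeasurableSpace X] [BorelSpace X]
    (ν : Measure X) [IsFiniteMeasure ν] (s : Finset (X × ℝ)) {η : ℝ} (hη : 0 < η) :
    ∃ t > 0, ν.real (⋃ p ∈ s, ball p.1 p.2) - η < ν.real (⋃ p ∈ s, ball p.1 (p.2 - t)) := by
  let u : ℕ → Set X := fun n => ⋃ p ∈ s, ball p.1 (p.2 - 1 / ((n : ℝ) + 1))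
  have hmono : Monotone u := by
    intro m n hmn
    refine iUnion₂_mono fun p _ => ball_subset_ball ?_
    have := Nat.one_div_le_one_div (α := ℝ) hmn
    linarith
  have hU : ⋃ n, u n = ⋃ p ∈ s, ball p.1 p.2 := by
    ext z
    simp only [u, mem_iUnion, exists_prop, mem_ball]
    constructor
    · rintro ⟨n, p, hp, hz⟩
      have := Nat.one_div_pos_of_nat (α := ℝ) (n := n)
      exact ⟨p, hp, by linarith⟩
    · rintro ⟨p, hp, hz⟩
      obtain ⟨n, hn⟩ := exists_nat_one_div_lt (sub_pos.2 hz)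
      exact ⟨n, p, hp, by linarith⟩
  have h := tendsto_measure_iUnion_atTop (μ := ν) hmono
  rw [hU] at h
  have h2 := (ENNReal.tendsto_toReal (measure_ne_top _ _)).comp h
  obtain ⟨n, hn⟩ := (h2.eventually (lt_mem_nhds (sub_lt_self _ hη))).exists
  exact ⟨1 / ((n : ℝ) + 1), Nat.one_div_pos_of_nat, hn⟩

open Metric in
lemma vit_key [MetricSpace X] [MeasurableSpace X] [BorelSpace X]
    (μ ν : Measure X) [IsFiniteMeasure ν] (hν : ν ≪ μ) (Θ : Set X → ℝ)
    (ha : ∀ A : Set X, IsOpen A → |Θ A| ≤ (ν A).toReal)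
    (hb : ∀ A B C : Set X, IsOpen A → IsOpen B → IsOpen C → B ⊆ A → C ⊆ A →
        B ∩ C = ∅ → μ (A \ (B ∪ C)) = 0 → Θ A ≤ Θ B + Θ C)
    {ε : ℝ} {A : Set X} (hA : IsOpen A)
    {P : Set (X × ℝ)} (hP : IsVitaliPack μ ε A P) {η : ℝ} (hη : 0 < η) :
    ∃ δ > 0, ∀ P', IsVitaliPack μ δ A P' →
      ∑' p : P, Θ (ball p.1.1 p.1.2) ≤ ∑' p : P', Θ (ball p.1.1 p.1.2) + η := by
  classical
  obtain ⟨s, hsP, hs⟩ := vit_finset μ ν hν hP (η := η / 6) (by positivity)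
  obtain ⟨t, ht, hst⟩ := vit_shrink ν s (η := η / 6) (by positivity)
  refine ⟨t / 2, by positivity, fun P' hP' => ?_⟩
  obtain ⟨T, hTP, hT⟩ := vit_finset μ ν hν hP' (η := η / 6) (by positivity)
  let Tp : X × ℝ → Finset (X × ℝ) := fun p => T.filter (fun q => ball q.1 q.2 ⊆ ball p.1 p.2)
  let T' := s.biUnion Tp
  have hT'T : T' ⊆ T := by
    intro q hq
    simp only [T', Tp, Finset.mem_biUnion, Finset.mem_filter] at hq
    obtain ⟨p, _, h, _⟩ := hq
    exact h
  have hdT : (T : Set (X × ℝ)).PairwiseDisjoint (fun p => ball p.1 p.2) := hP'.2.2.1.subset hTP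
  have hds : (s : Set (X × ℝ)).PairwiseDisjoint (fun p => ball p.1 p.2) := hP.2.2.1.subset hsP
  have hbi : (s : Set (X × ℝ)).PairwiseDisjoint Tp := by
    intro p hp p' hp' hne
    rw [Function.onFun, Finset.disjoint_left]
    intro q hq hq'
    simp only [Tp, Finset.mem_filter] at hq hq'
    have hqc : q.1 ∈ ball q.1 q.2 := mem_ball_self (hP'.2.1 q (hTP hq.1)).2.1
    exact (hds hp hp' hne).le_bot ⟨hq.2 hqc, hq'.2 hqc⟩
  have hsub : ∀ p ∈ s, Θ (ball p.1 p.2) ≤ ∑ q ∈ Tp p, Θ (ball q.1 q.2)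
      + (ν.real (ball p.1 p.2) - ∑ q ∈ Tp p, ν.real (ball q.1 q.2)) := by
    intro p hp
    refine vit_sub μ ν Θ ha hb (Tp p) _ isOpen_ball ?_ ?_
    · intro q hq
      simp only [Tp, Finset.mem_filter] at hq
      exact ⟨hq.2, (hP'.2.1 q (hTP hq.1)).2.2.2.2⟩
    · exact hdT.subset (Finset.coe_subset.2 (Finset.filter_subset _ _))
  have hsum := Finset.sum_le_sum hsub
  rw [Finset.sum_add_distrib, Finset.sum_sub_distrib, ← Finset.sum_biUnion hbi,
    ← Finset.sum_biUnion hbi] at hsum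
  change _ ≤ ∑ q ∈ T', _ + (_ - ∑ q ∈ T', _) at hsum
  have h1 := (abs_le.1 (vit_tail μ ν hν Θ ha hP s hsP)).2
  have h2 := (abs_le.1 (vit_tail μ ν hν Θ ha hP' T'
    (fun q hq => hTP (hT'T hq)))).1
  have hU : ∀ S : Finset (X × ℝ), (S : Set (X × ℝ)).PairwiseDisjoint (fun p => ball p.1 p.2) →
      ν.real (⋃ p ∈ S, ball p.1 p.2) = ∑ p ∈ S, ν.real (ball p.1 p.2) := fun S hS =>
    measureReal_biUnion_finset hS (fun p _ => isOpen_ball.measurableSet)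
  have hTA : (⋃ p ∈ T, ball p.1 p.2) ⊆ A :=
    iUnion₂_subset fun p hp => (hP'.2.1 p (hTP hp)).2.2.2.1
  have hincl : (⋃ p ∈ s, ball p.1 (p.2 - t)) ⊆
      (⋃ p ∈ T', ball p.1 p.2) ∪ (A \ ⋃ p ∈ T, ball p.1 p.2) := by
    intro z hz
    by_cases hzT : z ∈ ⋃ p ∈ T, ball p.1 p.2
    · left
      simp only [mem_iUnion, exists_prop] at hz hzT ⊢
      obtain ⟨p, hp, hzp⟩ := hz
      obtain ⟨q, hq, hzq⟩ := hzT
      refine ⟨q, ?_, hzq⟩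
      simp only [T', Tp, Finset.mem_biUnion, Finset.mem_filter]
      refine ⟨p, hp, hq, fun w hw => ?_⟩
      have hr := (hP'.2.1 q (hTP hq)).2.2.1
      rw [mem_ball] at *
      have i1 := dist_triangle w q.1 p.1
      have i2 := dist_triangle q.1 z p.1
      rw [dist_comm q.1 z] at i2
      linarith
    · right
      refine ⟨?_, hzT⟩
      simp only [mem_iUnion, exists_prop] at hz
      obtain ⟨p, hp, hzp⟩ := hz
      exact (hP.2.1 p (hsP hp)).2.2.2.1 (ball_subset_ball (by linarith) hzp)
  have h3 := (measureReal_mono (μ := ν) hincl).trans (measureReal_union_le _ _)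
  rw [measureReal_diff hTA (Finset.measurableSet_biUnion _ fun p _ => isOpen_ball.measurableSet),
    hU T hdT, hU T' (hdT.subset (by exact_mod_cast hT'T))] at h3
  rw [hU s hds] at hst
  linarith

open Metric in
lemma vit_exists [MetricSpace X] [MeasurableSpace X] [BorelSpace X]
    (μ : Measure X) [IsFiniteMeasure μ]
    (hVitali : VitaliCoveringProperty μ) {ε : ℝ} (hε : 0 < ε) {A : Set X} (hA : IsOpen A) :
    ∃ P, IsVitaliPack μ ε A P := by
  obtain ⟨G, hGF, hc, hd, h0⟩ := hVitali A
    {p | p.1 ∈ A ∧ 0 < p.2 ∧ p.2 < ε ∧ ball p.1 p.2 ⊆ A ∧ μ (ballFrontier p.1 p.2) = 0}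
    (fun p hp => hp.2.1) (by
      intro x hx e he
      obtain ⟨r, hr, hrA⟩ := Metric.isOpen_iff.1 hA x hx
      have hcount : {a : ℝ | 0 < μ (ballFrontier x a)}.Countable := by
        refine Measure.countable_meas_pos_of_disjoint_iUnion (μ := μ)
          (As := fun a => ballFrontier x a) ?_ ?_
        · intro a
          exact measurableSet_closedBall.diff measurableSet_ball
        · intro a b hab
          rw [Function.onFun, Set.disjoint_left]
          intro z hz hz'
          simp only [ballFrontier, mem_diff, mem_closedBall, mem_ball, not_lt] at hz hz'
          exact hab (by linarith)
      have hm : 0 < min (min e ε) r := by positivity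
      obtain ⟨a, ha, ha'⟩ : ∃ a ∈ Ioo 0 (min (min e ε) r), a ∉ {a : ℝ | 0 < μ (ballFrontier x a)} := by
        by_contra! hcon
        exact (Cardinal.Real.Ioo_countable_iff.not.2 (not_le.2 hm)) (hcount.mono hcon)
      simp only [mem_Ioo, lt_min_iff] at ha
      exact ⟨a, ha.1, ha.2.1.1, hx, ha.1, ha.2.1.2,
        (ball_subset_ball ha.2.2.le).trans hrA, by simpa using ha'⟩)
  refine ⟨G, hc, fun p hp => hGF hp, hd.mono_on fun p _ => ball_subset_closedBall, ?_⟩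
  refine measure_mono_null (t := (A \ ⋃ p ∈ G, closedBall p.1 p.2) ∪
    ⋃ p ∈ G, ballFrontier p.1 p.2) ?_ (measure_union_null h0
      ((measure_biUnion_null_iff hc).2 fun p hp => (hGF hp).2.2.2.2))
  rintro z ⟨hz, hz2⟩
  by_cases h : z ∈ ⋃ p ∈ G, closedBall p.1 p.2
  · right
    simp only [mem_iUnion, exists_prop] at h hz2 ⊢
    obtain ⟨p, hp, hzp⟩ := h
    exact ⟨p, hp, hzp, fun hb => hz2 ⟨p, hp, hb⟩⟩
  · exact Or.inl ⟨hz, h⟩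

/-- If `X` satisfies the Vitali covering theorem with respect to `μ`
and `Θ` satisfies hypotheses (a) and (b), then the lower and upper Vitali envelopes
of `Θ` coincide on every open set. -/
theorem lowerVitaliEnvelope_eq_upperVitaliEnvelope
    [MetricSpace X] [MeasurableSpace X] [BorelSpace X]
    (μ : Measure X) [IsFiniteMeasure μ]
    (hpos : ∀ (x : X) (ρ : ℝ), 0 < ρ → 0 < μ (Metric.ball x ρ))
    (hVitali : VitaliCoveringProperty μ)
    (Θ : Set X → ℝ)
    (ha : ∃ ν : Measure X, IsFiniteMeasure ν ∧ ν ≪ μ ∧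
        ∀ A : Set X, IsOpen A → |Θ A| ≤ (ν A).toReal)
    (hb : ∀ A B C : Set X, IsOpen A → IsOpen B → IsOpen C → B ⊆ A → C ⊆ A →
        B ∩ C = ∅ → μ (A \ (B ∪ C)) = 0 → Θ A ≤ Θ B + Θ C) :
    ∀ A : Set X, IsOpen A → lowerVitaliEnvelope μ Θ A = upperVitaliEnvelope μ Θ A := by
  obtain ⟨ν, hνf, hν, ha⟩ := ha
  intro A hA
  have hps : ∀ {ε : ℝ} {P}, IsVitaliPack μ ε A P → packSum Θ P =
      ((∑' p : P, Θ (Metric.ball p.1.1 p.1.2) : ℝ) : EReal) := fun hP =>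
    vit_packSum Θ _ (vit_summable μ ν hν Θ ha hP)
  apply le_antisymm
  · refine iSup₂_le fun ε hε => le_iInf₂ fun ε' hε' => ?_
    obtain ⟨P, hP⟩ := vit_exists μ hVitali (lt_min hε hε') hA
    have hmono : ∀ e, min ε ε' ≤ e → IsVitaliPack μ e A P := fun e he =>
      ⟨hP.1, fun p hp => ⟨(hP.2.1 p hp).1, (hP.2.1 p hp).2.1, (hP.2.1 p hp).2.2.1.trans_le he,
        (hP.2.1 p hp).2.2.2⟩, hP.2.2⟩
    exact (sInf_le (mem_image_of_mem (packSum Θ) (hmono _ (min_le_left _ _)))).trans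
      (le_sSup (mem_image_of_mem (packSum Θ) (hmono _ (min_le_right _ _))))
  · refine (iInf₂_le 1 one_pos).trans (sSup_le ?_)
    rintro _ ⟨P, hP, rfl⟩
    rw [hps hP]
    refine EReal.ge_of_forall_gt_iff_ge.1 fun z hz => ?_
    rw [EReal.coe_lt_coe_iff] at hz
    obtain ⟨δ, hδ, hk⟩ := vit_key μ ν hν Θ ha hb hA hP (sub_pos.2 hz)
    refine le_trans (le_sInf ?_) (le_iSup₂ (f := fun (ε : ℝ) (_ : 0 < ε) =>
      sInf (packSum Θ '' {P | IsVitaliPack μ ε A P})) δ hδ)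
    rintro _ ⟨P', hP', rfl⟩
    rw [hps hP', EReal.coe_le_coe_iff]
    have := hk P' hP'
    linarith
end
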